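/- (Robust Pisier inequality.) There is an absolute constant C > 0 such that the following holds. Let n ≥ 2, let f : {-1,1}^n → ℝ satisfy E_{x uniform}[f(x)] = 0, let G be an orientation of the hypercube graph on {-1,1}^n, and let s ∈ [1, ∞). Then (E_{x uniform}[|f(x)|^s])^{1/s} ≤ C·log n · ( E_{x,y uniform and independent}[ | ∑_{i ∈ [n], (x,x^{(i)}) ∈ G} y_i·x_i·Δ_i f(x) |^s ] )^{1/s}. -/

import Mathlib

/-!
Write `T_ρ f(z)` for the mean of `f x` given that `z` copies each coordinate of `x` with
probability `ρ` and otherwise the coordinate of an independent uniform `y`; this is the usual noise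
operator, with `T_0 f = E f = 0`. Let `h(x, y) = ∑_{i : (x, x^{(i)}) ∈ G} y_i x_i Δ_i f(x)`. The
proof rests on the identity

`d/dρ T_ρ f(z) = 2 / (1 - ρ) * E[h(x, y) | z]`

(`hasDerivAt_noiseLp`, from `sum_deriv_coord`). In direction `i`, if `z_i` was copied from `x` then
the factor `y_i` averages to zero; otherwise `y_i = z_i` and `x_i` is uniform. Since
`x_i Δ_i f(x)` is the same at both ends of an edge and exactly one end is selected by `G`, the
orientation costs only the factor `2`.

Conditional expectation contracts every `L^s`, so the mean value inequality in `ℓ^s` gives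
`‖T_ρ f‖ ≤ 2 log (1 / (1 - ρ)) ‖h‖` (`norm_noiseLp_le_log`). Moreover
`‖f - T_ρ f‖ ≤ 2 (1 - ρ ^ n) ‖f‖`, because with probability `ρ ^ n` all coordinates are copied
(`norm_sub_noiseLp_le`). At `ρ = 1 - 1/(4n)` the second bound is at most `‖f‖ / 2` and the first is
`2 log (4n) ‖h‖ ≤ 6 log n ‖h‖`, so `C = 12` works.
-/

open scoped Classical

noncomputable section

namespace Subcube

/-- The ±1 value of a Boolean coordinate. -/
def sgn (b : Bool) : ℝ := if b then 1 else -1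

/-- Flip coordinate `i` of `x`. -/
def flipAt {ι : Type*} [DecidableEq ι] (i : ι) (x : ι → Bool) : ι → Bool :=
  Function.update x i (!(x i))

/-- `p` is a probability mass function. -/
def IsDist {α : Type*} [Fintype α] (p : α → ℝ) : Prop :=
  (∀ a, 0 ≤ p a) ∧ ∑ a, p a = 1

/-- Total variation distance to the uniform distribution. -/
def dTVU {α : Type*} [Fintype α] (p : α → ℝ) : ℝ :=
  (1/2) * ∑ a, |p a - 1 / (Fintype.card α : ℝ)|

/-- Probability mass of the event that a sample from `p` agrees with `y` outside `S`. -/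
def offMass {n : ℕ} (p : (Fin n → Bool) → ℝ) (S : Finset (Fin n)) (y : Fin n → Bool) : ℝ :=
  ∑ x : Fin n → Bool, if ∀ j ∉ S, x j = y j then p x else 0

/-- Projection of `p` to the coordinates outside `S`. -/
def projDist {n : ℕ} (p : (Fin n → Bool) → ℝ) (S : Finset (Fin n)) :
    ({i : Fin n // i ∉ S} → Bool) → ℝ :=
  fun u => ∑ x : Fin n → Bool, if ∀ i : {i : Fin n // i ∉ S}, x i.1 = u i then p x else 0

/-- Restriction of `p` with star set `S` and non-star coordinates set according to `y`. -/
def restrictDist {n : ℕ} (p : (Fin n → Bool) → ℝ) (S : Finset (Fin n)) (y : Fin n → Bool) :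
    ({i : Fin n // i ∈ S} → Bool) → ℝ :=
  fun z =>
    (∑ x : Fin n → Bool,
      if (∀ i : {i : Fin n // i ∈ S}, x i.1 = z i) ∧ (∀ j ∉ S, x j = y j) then p x else 0)
      / offMass p S y

/-- Mean of coordinate `i` of `p` conditioned on agreeing with `y` outside `S`
(the coordinate `i` of the mean vector of the restriction with star set `S`, for `i ∈ S`). -/
def condMean {n : ℕ} (p : (Fin n → Bool) → ℝ) (S : Finset (Fin n)) (y : Fin n → Bool)
    (i : Fin n) : ℝ :=
  (∑ x : Fin n → Bool, if ∀ j ∉ S, x j = y j then p x * sgn (x i) else 0) / offMass p S y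

/-- Mean vector of a distribution on a Boolean cube. -/
def meanVec {ι : Type*} [Fintype ι] (p : (ι → Bool) → ℝ) : ι → ℝ :=
  fun i => ∑ x : ι → Bool, p x * sgn (x i)

/-- Squared Euclidean norm. -/
def normSq {ι : Type*} [Fintype ι] (v : ι → ℝ) : ℝ := ∑ i, v i ^ 2

/-- Euclidean norm. -/
def l2norm {ι : Type*} [Fintype ι] (v : ι → ℝ) : ℝ := Real.sqrt (normSq v)

/-! ### Mixing two points of the cube -/

section Mixing

variable {n : ℕ}

/-- The point that copies `x` on the coordinates where the mask `m` is true, and `y` elsewhere. -/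
def mix (m x y : Fin n → Bool) : Fin n → Bool := fun i => if m i then x i else y i

/-- Probability of the mask `m` when each coordinate is true independently with probability `ρ`. -/
def maskWeight (ρ : ℝ) (m : Fin n → Bool) : ℝ := ∏ i, if m i then ρ else 1 - ρ

/-- Conditional expectation of `h x y` for uniform independent `x, y`, given `mix m x y = z`.
Writing `u = mix m y x` for the complementary mixture, `x = mix m z u` and `y = mix m u z`. -/
def avgMix (m : Fin n → Bool) (h : (Fin n → Bool) → (Fin n → Bool) → ℝ) (z : Fin n → Bool) : ℝ :=
  (∑ u, h (mix m z u) (mix m u z)) / 2 ^ n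

lemma flipAt_flipAt (i : Fin n) (x : Fin n → Bool) : flipAt i (flipAt i x) = x := by
  ext j; by_cases h : j = i
  · subst h; simp [flipAt]
  · simp [flipAt, h]

lemma flipAt_self (i : Fin n) (x : Fin n → Bool) : flipAt i x i = !(x i) := by simp [flipAt]

lemma flipAt_ne {i j : Fin n} (h : j ≠ i) (x : Fin n → Bool) : flipAt i x j = x j := by
  simp [flipAt, h]

lemma sum_flipAt (i : Fin n) (a : (Fin n → Bool) → ℝ) : ∑ u, a (flipAt i u) = ∑ u, a u :=
  Equiv.sum_comp (Function.Involutive.toPerm (flipAt i) (flipAt_flipAt i)) a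

/-- Two sums over the cube agree if they agree on every edge in direction `i`. -/
lemma sum_eq_of_flip (i : Fin n) (a b : (Fin n → Bool) → ℝ)
    (h : ∀ u, a u + a (flipAt i u) = b u + b (flipAt i u)) : ∑ u, a u = ∑ u, b u := by
  have h' := Finset.sum_congr (rfl : (Finset.univ : Finset (Fin n → Bool)) = Finset.univ)
    (fun u _ => h u)
  rw [Finset.sum_add_distrib, Finset.sum_add_distrib, sum_flipAt, sum_flipAt] at h'
  linarith

lemma sum_pair_mix (m : Fin n → Bool) (H : (Fin n → Bool) → (Fin n → Bool) → ℝ) :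
    ∑ z, ∑ u, H (mix m z u) (mix m u z) = ∑ z, ∑ u, H z u := by
  have hinv : Function.Involutive
      (fun p : (Fin n → Bool) × (Fin n → Bool) => (mix m p.1 p.2, mix m p.2 p.1)) := by
    rintro ⟨x, y⟩
    ext j <;> by_cases h : m j <;> simp [mix, h]
  rw [← Fintype.sum_prod_type', ← Fintype.sum_prod_type']
  exact Equiv.sum_comp hinv.toPerm (fun p => H p.1 p.2)

/-- `avgMix m` is a contraction in every `L^s`, by Jensen's inequality and because
`(z, u) ↦ (mix m z u, mix m u z)` permutes pairs of points. -/
lemma sum_abs_avgMix_rpow_le {s : ℝ} (hs : 1 ≤ s) (m : Fin n → Bool)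
    (h : (Fin n → Bool) → (Fin n → Bool) → ℝ) :
    ∑ z, |avgMix m h z| ^ s ≤ (∑ x, ∑ y, |h x y| ^ s) / 2 ^ n := by
  rw [← sum_pair_mix m (fun x y => |h x y| ^ s), Finset.sum_div]
  refine Finset.sum_le_sum fun z _ => ?_
  have hJ := Real.rpow_arith_mean_le_arith_mean_rpow (Finset.univ : Finset (Fin n → Bool))
    (fun _ => 1 / 2 ^ n) (fun u => |h (mix m z u) (mix m u z)|) (fun _ _ => by positivity)
    (by simp) (fun _ _ => abs_nonneg _) hs
  rw [← Finset.mul_sum, ← Finset.mul_sum] at hJ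
  refine le_trans (Real.rpow_le_rpow (abs_nonneg _) ?_ (by linarith)) (hJ.trans_eq (by ring))
  rw [avgMix, abs_div, abs_of_pos (by positivity : (0 : ℝ) < 2 ^ n), div_eq_inv_mul, one_div]
  gcongr
  exact Finset.abs_sum_le_sum_abs _ _

lemma maskWeight_nonneg {ρ : ℝ} (h0 : 0 ≤ ρ) (h1 : ρ ≤ 1) (m : Fin n → Bool) :
    0 ≤ maskWeight ρ m :=
  Finset.prod_nonneg fun i _ => by split_ifs <;> linarith

lemma sum_maskWeight (ρ : ℝ) : ∑ m : Fin n → Bool, maskWeight ρ m = 1 := by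
  have := Finset.prod_univ_sum (fun _ : Fin n => (Finset.univ : Finset Bool))
    (fun _ b => if b then ρ else 1 - ρ)
  simp only [Fintype.piFinset_univ] at this
  unfold maskWeight
  rw [← this]
  simp

lemma maskWeight_true (ρ : ℝ) : maskWeight ρ (fun _ : Fin n => true) = ρ ^ n := by
  simp [maskWeight]

/-! ### The derivative of the noise operator -/

lemma hasDerivAt_maskWeight (ρ : ℝ) (m : Fin n → Bool) :
    HasDerivAt (fun t => maskWeight t m)
      (∑ i, (∏ j ∈ Finset.univ.erase i, if m j then ρ else 1 - ρ) * sgn (m i)) ρ := by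
  unfold maskWeight
  have := HasDerivAt.fun_finsetProd (u := (Finset.univ : Finset (Fin n)))
    (f := fun i t => if m i then t else 1 - t) (f' := fun i => sgn (m i)) (x := ρ) (by
      intro i _
      cases h : m i
      · simpa [sgn] using (hasDerivAt_id ρ).const_sub 1
      · simpa [sgn] using hasDerivAt_id' ρ)
  simpa [smul_eq_mul] using this

lemma mix_flip_right_of_true {m : Fin n → Bool} {i : Fin n} (h : m i = true)
    (x y : Fin n → Bool) : mix m x (flipAt i y) = mix m x y := by
  ext j; by_cases hj : j = i
  · subst hj; simp [mix, h]
  · simp [mix, flipAt_ne hj]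

lemma mix_flip_left_of_true {m : Fin n → Bool} {i : Fin n} (h : m i = true)
    (x y : Fin n → Bool) : mix m (flipAt i x) y = flipAt i (mix m x y) := by
  ext j; by_cases hj : j = i
  · subst hj; simp [mix, h, flipAt_self]
  · simp [mix, flipAt_ne hj]

lemma mix_flip_right_of_false {m : Fin n → Bool} {i : Fin n} (h : m i = false)
    (x y : Fin n → Bool) : mix m x (flipAt i y) = flipAt i (mix m x y) := by
  ext j; by_cases hj : j = i
  · subst hj; simp [mix, h, flipAt_self]
  · simp [mix, flipAt_ne hj]

lemma mix_flip_left_of_false {m : Fin n → Bool} {i : Fin n} (h : m i = false)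
    (x y : Fin n → Bool) : mix m (flipAt i x) y = mix m x y := by
  ext j; by_cases hj : j = i
  · subst hj; simp [mix, h]
  · simp [mix, flipAt_ne hj]

/-- The `i`-th summand `y_i x_i Δ_i f(x)` of the oriented gradient, zero unless the edge at `x` in
direction `i` leaves `x`. -/
def gradTerm (f : (Fin n → Bool) → ℝ) (G : (Fin n → Bool) → Fin n → Bool) (i : Fin n)
    (x y : Fin n → Bool) : ℝ :=
  if G x i = true then sgn (y i) * sgn (x i) * ((f x - f (flipAt i x)) / 2) else 0

/-- If `i` is in the mask then `z_i = x_i` and `y_i` is independent and uniform, so the odd factor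
`y_i` averages out. -/
lemma avgMix_gradTerm_of_true (f : (Fin n → Bool) → ℝ) (G : (Fin n → Bool) → Fin n → Bool)
    {m : Fin n → Bool} {i : Fin n} (h : m i = true) (z : Fin n → Bool) :
    avgMix m (gradTerm f G i) z = 0 := by
  have : ∑ u, gradTerm f G i (mix m z u) (mix m u z) = ∑ u : Fin n → Bool, 0 := by
    refine sum_eq_of_flip i _ _ fun u => ?_
    rw [mix_flip_right_of_true h, mix_flip_left_of_true h]
    unfold gradTerm
    rw [flipAt_self]
    cases mix m u z i <;> simp [sgn] <;> split_ifs <;> simp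
  rw [avgMix, this]; simp

/-- If `i` is not in the mask then `y_i = z_i` while `x_i` is still uniform. The two endpoints of
the edge at `x` in direction `i` contribute equally up to `G`, and `G` selects exactly one of
them. -/
lemma avgMix_gradTerm_of_false (f : (Fin n → Bool) → ℝ) {G : (Fin n → Bool) → Fin n → Bool}
    (hG : ∀ x i, G x i = !G (flipAt i x) i)
    {m : Fin n → Bool} {i : Fin n} (h : m i = false) (z : Fin n → Bool) :
    2 * avgMix m (gradTerm f G i) z =
      avgMix (flipAt i m) (fun x _ => f x) z - avgMix m (fun x _ => f x) z := by
  have h' : flipAt i m i = true := by simp [flipAt_self, h]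
  unfold avgMix
  rw [← sub_div, ← mul_div_assoc, Finset.mul_sum, ← Finset.sum_sub_distrib]
  congr 1
  refine sum_eq_of_flip i _ _ fun u => ?_
  simp only [mix_flip_right_of_false h, mix_flip_left_of_false h, mix_flip_right_of_true h']
  have hY : mix m u z i = z i := by simp [mix, h]
  have hX : mix (flipAt i m) z u =
      if mix m z u i = z i then mix m z u else flipAt i (mix m z u) := by
    have hXi : mix m z u i = u i := by simp [mix, h]
    rw [hXi]
    ext j; by_cases hj : j = i
    · subst hj
      split_ifs with hu
      · simp [mix, h, h', hu]
      · simp only [mix, h', flipAt_self, h]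
        revert hu; cases u j <;> cases z j <;> simp
    · split_ifs <;> simp [mix, flipAt_ne hj]
  rw [hX]
  generalize mix m z u = X
  unfold gradTerm
  rw [hY, flipAt_flipAt, flipAt_self, hG X i, apply_ite f]
  generalize G (flipAt i X) i = g
  generalize X i = a
  generalize z i = b
  cases g <;> cases a <;> cases b <;> simp [sgn] <;> ring

/-- One coordinate direction of the identity
`d/dρ T_ρ f = 2 / (1 - ρ) * E[gradient | mixture]`. -/
lemma sum_deriv_coord (f : (Fin n → Bool) → ℝ) {G : (Fin n → Bool) → Fin n → Bool}
    (hG : ∀ x i, G x i = !G (flipAt i x) i) (i : Fin n) {ρ : ℝ} (hρ : ρ < 1) (z : Fin n → Bool) :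
    ∑ m : Fin n → Bool, (∏ j ∈ Finset.univ.erase i, if m j then ρ else 1 - ρ) * sgn (m i) *
        avgMix m (fun x _ => f x) z =
      ∑ m, 2 / (1 - ρ) * (maskWeight ρ m * avgMix m (gradTerm f G i) z) := by
  have hne : 1 - ρ ≠ 0 := by linarith
  have hw : ∀ m : Fin n → Bool, maskWeight ρ m =
      (if m i then ρ else 1 - ρ) * ∏ j ∈ Finset.univ.erase i, if m j then ρ else 1 - ρ := fun m =>
    (Finset.mul_prod_erase _ (fun j => if m j then ρ else 1 - ρ) (Finset.mem_univ i)).symm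
  have hprod : ∀ m : Fin n → Bool,
      (∏ j ∈ Finset.univ.erase i, if flipAt i m j then ρ else 1 - ρ) =
        ∏ j ∈ Finset.univ.erase i, if m j then ρ else 1 - ρ := fun m =>
    Finset.prod_congr rfl fun j hj => by rw [flipAt_ne (Finset.ne_of_mem_erase hj)]
  refine sum_eq_of_flip i _ _ ?_
  have main : ∀ m : Fin n → Bool, m i = false →
      (∏ j ∈ Finset.univ.erase i, if m j then ρ else 1 - ρ) * sgn (m i) *
          avgMix m (fun x _ => f x) z +
        (∏ j ∈ Finset.univ.erase i, if flipAt i m j then ρ else 1 - ρ) * sgn (flipAt i m i) *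
          avgMix (flipAt i m) (fun x _ => f x) z =
      2 / (1 - ρ) * (maskWeight ρ m * avgMix m (gradTerm f G i) z) +
        2 / (1 - ρ) * (maskWeight ρ (flipAt i m) * avgMix (flipAt i m) (gradTerm f G i) z) := by
    intro m hm
    have h' : flipAt i m i = true := by simp [flipAt_self, hm]
    have e := avgMix_gradTerm_of_false f hG hm z
    rw [avgMix_gradTerm_of_true f G h', hw m, hprod, hm, h']
    have e2 : avgMix (flipAt i m) (fun x _ => f x) z =
      2 * avgMix m (gradTerm f G i) z + avgMix m (fun x _ => f x) z := by linarith
    rw [e2]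
    simp only [sgn]
    field_simp
    simp
    ring
  intro m
  cases hm : m i
  · have := main m hm
    rwa [hm] at this
  · have := main (flipAt i m) (by simp [flipAt_self, hm])
    rw [flipAt_flipAt, hm] at this
    linarith

end Mixing

/-! ### Norm estimates -/

section Norm

variable {n : ℕ}

/-- `avgMix m h` as a vector of the (unnormalised) `ℓ^s` space on the cube. -/
def avgMixLp (s : ℝ) (m : Fin n → Bool) (h : (Fin n → Bool) → (Fin n → Bool) → ℝ) :
    PiLp (ENNReal.ofReal s) (fun _ : Fin n → Bool => ℝ) :=
  WithLp.toLp _ (avgMix m h)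

/-- Conditional expectation of `h x y` given the mixture of `x` and `y` along a random mask of
density `ρ`. For `h x y = f x` this is the noise operator `T_ρ f`. -/
def noiseLp (s ρ : ℝ) (h : (Fin n → Bool) → (Fin n → Bool) → ℝ) :
    PiLp (ENNReal.ofReal s) (fun _ : Fin n → Bool => ℝ) :=
  ∑ m, maskWeight ρ m • avgMixLp s m h

lemma norm_toLp_eq {s : ℝ} (hs : 1 ≤ s) (g : (Fin n → Bool) → ℝ) :
    ‖(WithLp.toLp (ENNReal.ofReal s) g : PiLp (ENNReal.ofReal s) (fun _ : Fin n → Bool => ℝ))‖ =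
      (∑ x, |g x| ^ s) ^ (1 / s) := by
  have h : (ENNReal.ofReal s).toReal = s := ENNReal.toReal_ofReal (by linarith)
  rw [PiLp.norm_eq_sum (by rw [h]; linarith), h]
  simp

lemma norm_avgMixLp_le {s : ℝ} (hs : 1 ≤ s) (m : Fin n → Bool)
    (h : (Fin n → Bool) → (Fin n → Bool) → ℝ) :
    ‖avgMixLp s m h‖ ≤ ((∑ x, ∑ y, |h x y| ^ s) / 2 ^ n) ^ (1 / s) := by
  rw [avgMixLp, norm_toLp_eq hs]
  exact Real.rpow_le_rpow (Finset.sum_nonneg fun _ _ => by positivity)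
    (sum_abs_avgMix_rpow_le hs m h) (by positivity)

lemma norm_noiseLp_le {s ρ : ℝ} [Fact (1 ≤ ENNReal.ofReal s)] (hs : 1 ≤ s) (h0 : 0 ≤ ρ)
    (h1 : ρ ≤ 1) (h : (Fin n → Bool) → (Fin n → Bool) → ℝ) :
    ‖noiseLp s ρ h‖ ≤ ((∑ x, ∑ y, |h x y| ^ s) / 2 ^ n) ^ (1 / s) := by
  refine (norm_sum_le _ _).trans ?_
  calc _ ≤ ∑ m : Fin n → Bool,
          maskWeight ρ m * ((∑ x, ∑ y, |h x y| ^ s) / 2 ^ n) ^ (1 / s) := by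
        refine Finset.sum_le_sum fun m _ => ?_
        have hw := maskWeight_nonneg h0 h1 m
        rw [norm_smul, Real.norm_of_nonneg hw]
        exact mul_le_mul_of_nonneg_left (norm_avgMixLp_le hs m h) hw
    _ = _ := by rw [← Finset.sum_mul, sum_maskWeight, one_mul]

/-- The oriented gradient `∑_{i : (x, x^{(i)}) ∈ G} y_i x_i Δ_i f(x)`. -/
def grad (f : (Fin n → Bool) → ℝ) (G : (Fin n → Bool) → Fin n → Bool)
    (x y : Fin n → Bool) : ℝ := ∑ i, gradTerm f G i x y

lemma avgMix_grad (f : (Fin n → Bool) → ℝ) (G : (Fin n → Bool) → Fin n → Bool)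
    (m z : Fin n → Bool) : avgMix m (grad f G) z = ∑ i, avgMix m (gradTerm f G i) z := by
  unfold avgMix grad
  rw [Finset.sum_comm, Finset.sum_div]

/-- Differentiating the noise operator in `ρ` produces the smoothed oriented gradient. -/
lemma hasDerivAt_noiseLp {s ρ : ℝ} [Fact (1 ≤ ENNReal.ofReal s)] (hρ : ρ < 1)
    (f : (Fin n → Bool) → ℝ) {G : (Fin n → Bool) → Fin n → Bool}
    (hG : ∀ x i, G x i = !G (flipAt i x) i) :
    HasDerivAt (fun t => noiseLp s t (fun x _ => f x))
      ((2 / (1 - ρ)) • noiseLp s ρ (grad f G)) ρ := by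
  unfold noiseLp
  have h := HasDerivAt.fun_sum (u := (Finset.univ : Finset (Fin n → Bool)))
    (fun m _ => (hasDerivAt_maskWeight ρ m).smul_const (avgMixLp s m (fun x _ => f x)))
  convert! h using 1
  ext z
  simp only [avgMixLp, PiLp.smul_apply, smul_eq_mul, WithLp.ofLp_sum, Finset.sum_apply,
    WithLp.ofLp_smul, Pi.smul_apply, avgMix_grad, Finset.sum_mul, Finset.mul_sum]
  rw [Finset.sum_comm]
  conv_rhs => rw [Finset.sum_comm]
  exact Finset.sum_congr rfl fun i _ => (sum_deriv_coord f hG i hρ z).symm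

lemma noiseLp_zero (s : ℝ) {f : (Fin n → Bool) → ℝ} (hf : ∑ x, f x = 0) :
    noiseLp s 0 (fun x _ => f x) = 0 := by
  unfold noiseLp
  refine Finset.sum_eq_zero fun m _ => ?_
  by_cases hm : ∃ i, m i = true
  · obtain ⟨i, hi⟩ := hm
    have : maskWeight 0 m = 0 :=
      Finset.prod_eq_zero (Finset.mem_univ i) (by simp [hi])
    rw [this, zero_smul]
  · push Not at hm
    have : avgMixLp s m (fun x _ => f x) = 0 := by
      ext z
      have hmix : ∀ u, mix m z u = u := fun u => by ext j; simp [mix, hm j]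
      simp [avgMixLp, avgMix, hmix, hf]
    rw [this, smul_zero]

/-- Integrating the derivative over `[0, ρ]`, with `∫ 2 / (1 - t) = -2 log (1 - ρ)`. -/
lemma norm_noiseLp_le_log {s ρ : ℝ} [Fact (1 ≤ ENNReal.ofReal s)] (hs : 1 ≤ s) (h0 : 0 ≤ ρ)
    (h1 : ρ < 1) {f : (Fin n → Bool) → ℝ} (hf : ∑ x, f x = 0)
    {G : (Fin n → Bool) → Fin n → Bool} (hG : ∀ x i, G x i = !G (flipAt i x) i) :
    ‖noiseLp s ρ (fun x _ => f x)‖ ≤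
      -2 * ((∑ x, ∑ y, |grad f G x y| ^ s) / 2 ^ n) ^ (1 / s) * Real.log (1 - ρ) := by
  set D := ((∑ x, ∑ y, |grad f G x y| ^ s) / 2 ^ n) ^ (1 / s)
  have hB : ∀ t < (1 : ℝ), HasDerivAt (fun t => -2 * D * Real.log (1 - t))
      (2 / (1 - t) * D) t := by
    intro t ht
    have h := (((hasDerivAt_id t).const_sub 1).log (by simp; linarith)).const_mul (-2 * D)
    convert! h using 1
    simp only [id]
    ring
  refine image_norm_le_of_norm_deriv_right_le_deriv_boundary' (a := 0) (b := ρ)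
    (f := fun t => noiseLp s t (fun x _ => f x))
    (f' := fun t => (2 / (1 - t)) • noiseLp s t (grad f G))
    (B := fun t => -2 * D * Real.log (1 - t)) (B' := fun t => 2 / (1 - t) * D)
    ?_ ?_ ?_ ?_ ?_ ?_ ⟨h0, le_rfl⟩
  · exact fun t ht =>
      (hasDerivAt_noiseLp (ht.2.trans_lt h1) f hG).continuousAt.continuousWithinAt
  · exact fun t ht => (hasDerivAt_noiseLp (ht.2.trans h1) f hG).hasDerivWithinAt
  · simp [noiseLp_zero s hf]
  · exact fun t ht => (hB t (ht.2.trans_lt h1)).continuousAt.continuousWithinAt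
  · exact fun t ht => (hB t (ht.2.trans h1)).hasDerivWithinAt
  · intro t ht
    have ht1 : 0 < 1 - t := by linarith [ht.2]
    rw [norm_smul, Real.norm_of_nonneg (by positivity)]
    gcongr
    exact norm_noiseLp_le hs ht.1 (by linarith) _

/-- The full mask has weight `ρ ^ n` and reproduces `f`; every other mask moves `f` by at most
`2 ‖f‖`. -/
lemma norm_sub_noiseLp_le {s ρ : ℝ} [Fact (1 ≤ ENNReal.ofReal s)] (hs : 1 ≤ s) (h0 : 0 ≤ ρ)
    (h1 : ρ ≤ 1) (f : (Fin n → Bool) → ℝ) :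
    ‖WithLp.toLp (ENNReal.ofReal s) f - noiseLp s ρ (fun x _ => f x)‖ ≤
      (1 - ρ ^ n) * (2 * ‖WithLp.toLp (ENNReal.ofReal s) f‖) := by
  set F := WithLp.toLp (ENNReal.ofReal s) f with hF
  have hcontr : ∀ m, ‖avgMixLp s m (fun x _ => f x)‖ ≤ ‖F‖ := by
    intro m
    refine (norm_avgMixLp_le hs m _).trans_eq ?_
    rw [hF, norm_toLp_eq hs]
    congr 1
    simp only [Finset.sum_const, Finset.card_univ, Fintype.card_fun, Fintype.card_bool,
      Fintype.card_fin, nsmul_eq_mul, ← Finset.mul_sum]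
    push_cast
    field_simp
  have htrue : avgMixLp s (fun _ => true) (fun x _ => f x) = F := by
    ext z
    have hmix : ∀ u, mix (fun _ => true) z u = z := fun u => by ext j; simp [mix]
    simp [avgMixLp, avgMix, hmix, hF]
  have hdiff : F - noiseLp s ρ (fun x _ => f x) =
      ∑ m ∈ Finset.univ.erase (fun _ : Fin n => true),
        maskWeight ρ m • (F - avgMixLp s m (fun x _ => f x)) := by
    rw [Finset.sum_erase _ (by rw [htrue, sub_self, smul_zero])]
    simp only [smul_sub, Finset.sum_sub_distrib, ← Finset.sum_smul, sum_maskWeight, one_smul]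
    rfl
  have hsum : ∑ m ∈ Finset.univ.erase (fun _ : Fin n => true), maskWeight ρ m = 1 - ρ ^ n := by
    rw [← maskWeight_true, ← sum_maskWeight ρ,
      ← Finset.add_sum_erase _ (maskWeight ρ) (Finset.mem_univ (fun _ : Fin n => true))]
    ring
  rw [hdiff, ← hsum, Finset.sum_mul]
  refine (norm_sum_le _ _).trans (Finset.sum_le_sum fun m _ => ?_)
  have hw := maskWeight_nonneg h0 h1 m
  rw [norm_smul, Real.norm_of_nonneg hw]
  refine mul_le_mul_of_nonneg_left ?_ hw
  linarith [norm_sub_le F (avgMixLp s m (fun x _ => f x)), hcontr m]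

end Norm

/-- Robust Pisier inequality: there is an absolute `C > 0` such that for every
`n ≥ 2`, every `f` with `E[f] = 0`, every orientation `G` of the hypercube
(`G x i = true` meaning the edge `{x, x ⊕ e_i}` is oriented from `x` to `x ⊕ e_i`),
and every `s ∈ [1,∞)`:
`(E_x[|f(x)|^s])^{1/s} ≤ C·log n·(E_{x,y}[|∑_{i : (x,x^{(i)}) ∈ G} y_i x_i Δ_i f(x)|^s])^{1/s}`. -/
theorem stmt3 : ∃ C > (0:ℝ), ∀ n : ℕ, 2 ≤ n → ∀ f : (Fin n → Bool) → ℝ,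
    (∑ x : Fin n → Bool, f x) / 2 ^ n = 0 →
    ∀ G : (Fin n → Bool) → Fin n → Bool, (∀ x i, G x i = !G (flipAt i x) i) →
    ∀ s : ℝ, 1 ≤ s →
    ((∑ x : Fin n → Bool, |f x| ^ s) / 2 ^ n) ^ (1 / s) ≤
      C * Real.log n *
        ((∑ x : Fin n → Bool, ∑ y : Fin n → Bool,
            |∑ i ∈ Finset.univ.filter (fun i => G x i = true),
              sgn (y i) * sgn (x i) * ((f x - f (flipAt i x)) / 2)| ^ s)
          / 2 ^ n / 2 ^ n) ^ (1 / s) := by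
  refine ⟨12, by norm_num, fun n hn f hf G hG s hs => ?_⟩
  have hf0 : ∑ x, f x = 0 := by
    rcases div_eq_zero_iff.mp hf with h | h
    · exact h
    · exact absurd h (by positivity)
  have : Fact (1 ≤ ENNReal.ofReal s) := ⟨by simpa using hs⟩
  have hgrad : ∀ x y, (∑ i ∈ Finset.univ.filter (fun i => G x i = true),
      sgn (y i) * sgn (x i) * ((f x - f (flipAt i x)) / 2)) = grad f G x y := fun x y => by
    rw [Finset.sum_filter]; rfl
  simp only [hgrad]
  have hn' : (2 : ℝ) ≤ n := by exact_mod_cast hn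
  -- `ρ = 1 - 1/(4n)` makes `ρ ^ n ≥ 3/4`, so `T_ρ f` stays within `‖f‖ / 2` of `f`, while
  -- `-log (1 - ρ) = log (4n) ≤ 3 log n`.
  set ρ : ℝ := 1 - 1 / (4 * n) with hρ
  have hsmall : 1 / (4 * (n : ℝ)) ≤ 1 := by
    rw [div_le_one (by positivity)]; linarith
  have hpos : 0 < 1 / (4 * (n : ℝ)) := by positivity
  have h0 : 0 ≤ ρ := by linarith
  have h1 : ρ < 1 := by linarith
  have hpow : 3 / 4 ≤ ρ ^ n := by
    have := one_add_mul_le_pow (a := -(1 / (4 * (n : ℝ)))) (by linarith) n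
    rw [← sub_eq_add_neg, ← hρ] at this
    have e : (n : ℝ) * -(1 / (4 * n)) = -(1 / 4) := by field_simp
    linarith
  have hlog : -Real.log (1 - ρ) ≤ 3 * Real.log n := by
    have e : 1 - ρ = (4 * (n : ℝ))⁻¹ := by rw [hρ]; ring
    rw [e, Real.log_inv, neg_neg, ← Real.log_rpow (by positivity)]
    apply Real.log_le_log (by positivity)
    norm_cast
    nlinarith [Nat.mul_le_mul hn hn]
  have hA := norm_noiseLp_le_log hs h0 h1 hf0 hG
  have hBd := norm_sub_noiseLp_le hs h0 h1.le f
  have hT := norm_le_norm_sub_add (WithLp.toLp (ENNReal.ofReal s) f)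
    (noiseLp s ρ (fun x _ => f x))
  rw [norm_toLp_eq hs f] at hBd hT
  set N := (∑ x, |f x| ^ s) ^ (1 / s) with hN
  set S := ∑ x, ∑ y, |grad f G x y| ^ s with hS
  have hNn : 0 ≤ N := by positivity
  have hSn : 0 ≤ S := by positivity
  have hfinal : N ≤ 12 * Real.log n * (S / 2 ^ n) ^ (1 / s) := by
    have hD : 0 ≤ (S / 2 ^ n) ^ (1 / s) := by positivity
    have q1 := mul_le_mul_of_nonneg_right hpow hNn
    have q2 := mul_le_mul_of_nonneg_left hlog hD
    nlinarith
  rw [Real.div_rpow (by positivity) (by positivity), Real.div_rpow (by positivity) (by positivity),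
    ← mul_div_assoc]
  gcongr

end Subcube
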